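/- (Group Lasso error bound, deterministic part.) Consider W = XB + Z with W ∈ ℝ^{n×r}, X ∈ ℝ^{n×p}, B ∈ ℝ^{p×r} having at most s nonzero rows (s ≥ 1), and Z ∈ ℝ^{n×r}. Let B̂ minimize ‖W − XB‖_F²/2 + λ‖B‖_{2,1} over ℝ^{p×r} for a given λ > 0. Suppose Condition SE(s_*, c_*, K) holds with an absolute constant K > 1 and positive constants s_*, c_* satisfying s_* ≥ 2s and 6c_* ≤ √(s_*/s − 1). If 2‖X_{*j}'(W − XB)‖_F ≤ λ for all j ∈ {1,…,p}, then ‖B̂ − B‖_F ≤ 3(1 + (4c_*)^{-1})√s λ / κ_-²(s_*). -/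

import Mathlib

open MeasureTheory ProbabilityTheory Matrix Set
open scoped ENNReal NNReal

noncomputable section

/-- Euclidean (ℓ₂) norm of a finitely indexed real vector. -/
def l2norm {I : Type*} [Fintype I] (v : I → ℝ) : ℝ := Real.sqrt (∑ i, v i ^ 2)

/-- Frobenius norm of a real matrix. -/
def frobNorm {I J : Type*} [Fintype I] [Fintype J] (M : Matrix I J ℝ) : ℝ :=
  Real.sqrt (∑ i, ∑ j, M i j ^ 2)

/-- ℓ₂/ℓ₁ norm: the sum of the ℓ₂ norms of the rows. -/
def norm21 {I J : Type*} [Fintype I] [Fintype J] (M : Matrix I J ℝ) : ℝ :=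
  ∑ i, l2norm (M i)

open Classical in
/-- Row support: indices of nonzero rows. -/
def rowSupport {I J : Type*} [Fintype I] [Fintype J] (M : Matrix I J ℝ) : Finset I :=
  Finset.univ.filter (fun i => M i ≠ 0)

/-- The j-th largest singular value (j ≥ 1), via the Courant–Fischer max–min
characterization: `σ_j(M) = max_{dim V = j} min_{v ∈ V, ‖v‖=1} ‖Mv‖`. -/
def singularValue {I J : Type*} [Fintype I] [Fintype J] (M : Matrix I J ℝ) (j : ℕ) : ℝ :=
  sSup { t | ∃ V : Submodule ℝ (J → ℝ), Module.finrank ℝ V = j ∧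
    t = sInf { u | ∃ v ∈ V, l2norm v = 1 ∧ u = l2norm (M.mulVec v) } }

/-- Operator norm (largest singular value). -/
def opNorm {I J : Type*} [Fintype I] [Fintype J] (M : Matrix I J ℝ) : ℝ :=
  sSup { t | ∃ v : J → ℝ, l2norm v = 1 ∧ t = l2norm (M.mulVec v) }

/-- Schatten-q norm. -/
def schattenNorm {I J : Type*} [Fintype I] [Fintype J] (M : Matrix I J ℝ) (q : ℝ) : ℝ :=
  (∑ i ∈ Finset.Icc 1 (min (Fintype.card I) (Fintype.card J)), singularValue M i ^ q) ^ (1 / q)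

/-- Squared lower k-sparse Riesz constant `κ₋²(k)`:
the minimum over column subsets B with |B| = k of the smallest eigenvalue of X_B' X_B. -/
def kappaMinusSq {n p : ℕ} (X : Matrix (Fin n) (Fin p) ℝ) (k : ℕ) : ℝ :=
  sInf { t | ∃ B : Finset (Fin p), B.card = k ∧ ∃ v : Fin p → ℝ,
    (∀ i, i ∉ B → v i = 0) ∧ l2norm v = 1 ∧ t = l2norm (X.mulVec v) ^ 2 }

/-- Squared upper k-sparse Riesz constant `κ₊²(k)`. -/
def kappaPlusSq {n p : ℕ} (X : Matrix (Fin n) (Fin p) ℝ) (k : ℕ) : ℝ :=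
  sSup { t | ∃ B : Finset (Fin p), B.card = k ∧ ∃ v : Fin p → ℝ,
    (∀ i, i ∉ B → v i = 0) ∧ l2norm v = 1 ∧ t = l2norm (X.mulVec v) ^ 2 }

def kappaMinus {n p : ℕ} (X : Matrix (Fin n) (Fin p) ℝ) (k : ℕ) : ℝ :=
  Real.sqrt (kappaMinusSq X k)

def kappaPlus {n p : ℕ} (X : Matrix (Fin n) (Fin p) ℝ) (k : ℕ) : ℝ :=
  Real.sqrt (kappaPlusSq X k)

/-- Membership in the parameter space Θ(s, r, d, γ): rank r, all nonzero singular values in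
(d, γd], and at most s nonzero rows. (Singular values are automatically nonincreasing.) -/
def memTheta {p m : ℕ} (A : Matrix (Fin p) (Fin m) ℝ) (s r : ℕ) (d γ : ℝ) : Prop :=
  A.rank = r ∧ 0 < d ∧ singularValue A 1 ≤ γ * d ∧ d < singularValue A r ∧
    (rowSupport A).card ≤ s

/-- `V` is a matrix of top-r right singular vectors of `M`: the columns of `V` are orthonormal
eigenvectors of `MᵀM`, the j-th column with eigenvalue `σ_j(M)²`. -/
def IsRightSingularVectors {I J : Type*} [Fintype I] [Fintype J] {r : ℕ}
    (M : Matrix I J ℝ) (V : Matrix J (Fin r) ℝ) : Prop :=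
  Vᵀ * V = 1 ∧ ∀ j : Fin r,
    (Mᵀ * M).mulVec (fun i => V i j) = (singularValue M (j.1 + 1)) ^ 2 • (fun i => V i j)

/-- `U` is a matrix of top-r left singular vectors of `M`. -/
def IsLeftSingularVectors {I J : Type*} [Fintype I] [Fintype J] {r : ℕ}
    (M : Matrix I J ℝ) (U : Matrix I (Fin r) ℝ) : Prop :=
  IsRightSingularVectors Mᵀ U

instance matrixMeasurableSpace {n m : ℕ} : MeasurableSpace (Matrix (Fin n) (Fin m) ℝ) :=
  (inferInstance : MeasurableSpace (Fin n → Fin m → ℝ))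

/-- Law of an n×m random matrix with i.i.d. N(0, v) entries. -/
def gaussianMatrix (n m : ℕ) (v : ℝ≥0) : Measure (Matrix (Fin n) (Fin m) ℝ) :=
  Measure.pi fun _ : Fin n => Measure.pi fun _ : Fin m => gaussianReal 0 v

open Classical in
/-- Kullback–Leibler divergence D(P‖Q). -/
def klDivM {Ω : Type*} [MeasurableSpace Ω] (P Q : Measure Ω) : ℝ≥0∞ :=
  if P ≪ Q ∧ Integrable (fun x => Real.log (P.rnDeriv Q x).toReal) P
  then ENNReal.ofReal (∫ x, Real.log (P.rnDeriv Q x).toReal ∂P)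
  else ∞

/-- ε-packing number of T with respect to the distance ρ: the maximal cardinality of a subset
of T whose pairwise ρ-distances are all at least ε. -/
def packingNumber {α : Type*} (T : Set α) (ρ : α → α → ℝ) (ε : ℝ) : ℕ :=
  sSup { k | ∃ S : Finset α, ↑S ⊆ T ∧ (∀ x ∈ S, ∀ y ∈ S, x ≠ y → ε ≤ ρ x y) ∧ S.card = k }

/-- Moore–Penrose pseudoinverse (characterized by the four Penrose equations). -/
def IsMoorePenrose {k : ℕ} (M Mi : Matrix (Fin k) (Fin k) ℝ) : Prop :=
  M * Mi * M = M ∧ Mi * M * Mi = Mi ∧ (M * Mi)ᵀ = M * Mi ∧ (Mi * M)ᵀ = Mi * M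

/-!
Write `D = B̂ - B` and `S = supp B`. Convexity of the penalty turns minimality of `B̂` into a
variational inequality; testing it against `B̂ - D_T`, where `D_T` keeps the rows of `D` in
`T ⊇ S`, gives `⟨XD, XD_T⟩ ≤ λ (3/2 ∑_S ‖D_i‖ - 1/2 ∑_{T \ S} ‖D_i‖)`. For `T` the full index set
this is the cone condition `∑_{Sᶜ} ‖D_i‖ ≤ 3 ∑_S ‖D_i‖`. For `T = S ∪ A`, with `A` the `s_* - s`
largest rows outside `S`, cut `Tᶜ` into blocks of decreasing rows. Row-disjoint sparse matrices are
nearly orthogonal after applying `X`, so the blocks contribute to `⟨XD, XD_T⟩` at most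
`κ₋²(s_*) ‖D_T‖² / 2`. Hence `κ₋²(s_*) ‖D_T‖² / 2 ≤ ⟨XD, XD_T⟩ ≤ 3/2 λ √s ‖D_T‖`, which bounds
`‖D_T‖`, and the cone condition bounds `‖D‖` by `(1 + 1 / (4c_*)) ‖D_T‖`.
-/

section LargestEntries

variable {ι : Type*}

lemma exists_subset_card_eq_forall_sdiff_le [DecidableEq ι] {α : Type*} [LinearOrder α] (a : ι → α)
    (U : Finset ι) {k : ℕ} (hk : k ≤ U.card) :
    ∃ A ⊆ U, A.card = k ∧ ∀ i ∈ A, ∀ j ∈ U \ A, a j ≤ a i := by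
  induction k with
  | zero => exact ⟨∅, by simp⟩
  | succ k ih =>
    obtain ⟨A, hAU, hA, hmax⟩ := ih (by lia)
    have hne : (U \ A).Nonempty := by
      rw [← Finset.card_pos, Finset.card_sdiff_of_subset hAU]
      lia
    obtain ⟨m, hm, hm_max⟩ := Finset.exists_max_image (U \ A) a hne
    obtain ⟨hmU, hmA⟩ := Finset.mem_sdiff.1 hm
    refine ⟨insert m A, Finset.insert_subset hmU hAU, by simp [hmA, hA], fun i hi j hj => ?_⟩
    have hj' : j ∈ U \ A := by grind
    obtain rfl | hi := Finset.mem_insert.1 hi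
    · exact hm_max j hj'
    · exact hmax i hi j hj'

lemma exists_disjoint_card_eq_forall_compl_union_le [Fintype ι] [DecidableEq ι] {α : Type*}
    [LinearOrder α] (a : ι → α) (S : Finset ι) {k : ℕ} (hk : S.card + k ≤ Fintype.card ι) :
    ∃ A, Disjoint S A ∧ A.card = k ∧ ∀ i ∈ A, ∀ j ∈ (S ∪ A)ᶜ, a j ≤ a i := by
  obtain ⟨A, hAS, hA, hmax⟩ := exists_subset_card_eq_forall_sdiff_le a Sᶜ (k := k)
    (by rw [Finset.card_compl]; lia)
  refine ⟨A, (Finset.subset_compl_iff_disjoint_left).1 hAS, hA, fun i hi j hj => ?_⟩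
  exact hmax i hi j (by simpa using hj)

lemma sum_add_sum_compl_union [Fintype ι] [DecidableEq ι] {M : Type*} [AddCommMonoid M] (a : ι → M)
    {S A : Finset ι} (h : Disjoint S A) :
    ∑ i ∈ A, a i + ∑ i ∈ (S ∪ A)ᶜ, a i = ∑ i ∈ Sᶜ, a i := by
  rw [add_comm, Finset.compl_union, ← Finset.sdiff_eq_inter_compl]
  exact Finset.sum_sdiff (Finset.subset_compl_iff_disjoint_left.2 h)

lemma le_sum_div_card {a : ι → ℝ} {A : Finset ι} (hA : A.Nonempty) {m : ℝ}
    (h : ∀ i ∈ A, m ≤ a i) : m ≤ (∑ i ∈ A, a i) / A.card := by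
  rw [le_div_iff₀ (by exact_mod_cast hA.card_pos), mul_comm, ← nsmul_eq_mul]
  exact A.card_nsmul_le_sum a m h

variable {a : ι → ℝ} (ha : ∀ i, 0 ≤ a i) {A U : Finset ι} (hA : A.Nonempty)
  (hAU : ∀ i ∈ A, ∀ j ∈ U, a j ≤ a i)
include ha hA hAU

lemma sqrt_sum_sq_le_sum_div_sqrt_card (hcard : U.card ≤ A.card) :
    √(∑ i ∈ U, a i ^ 2) ≤ (∑ i ∈ A, a i) / √A.card := by
  have hA0 : (0 : ℝ) < A.card := by exact_mod_cast hA.card_pos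
  have hsum : 0 ≤ ∑ i ∈ A, a i := Finset.sum_nonneg fun i _ => ha i
  refine Real.sqrt_le_iff.2 ⟨by positivity, ?_⟩
  calc ∑ j ∈ U, a j ^ 2 ≤ ∑ _j ∈ U, ((∑ i ∈ A, a i) / A.card) ^ 2 :=
        Finset.sum_le_sum fun j hj =>
          pow_le_pow_left₀ (ha j) (le_sum_div_card hA fun i hi => hAU i hi j hj) 2
    _ = U.card * ((∑ i ∈ A, a i) / A.card) ^ 2 := by
        rw [Finset.sum_const, nsmul_eq_mul]
    _ ≤ A.card * ((∑ i ∈ A, a i) / A.card) ^ 2 := by gcongr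
    _ = ((∑ i ∈ A, a i) / √A.card) ^ 2 := by
        rw [div_pow, div_pow, Real.sq_sqrt hA0.le]
        field_simp

lemma sqrt_sum_sq_le_sum_add_sum_div :
    √(∑ i ∈ U, a i ^ 2) ≤ (∑ i ∈ A, a i + ∑ i ∈ U, a i) / √A.card / 2 := by
  have hA0 : (0 : ℝ) < A.card := by exact_mod_cast hA.card_pos
  have hsumA : 0 ≤ ∑ i ∈ A, a i := Finset.sum_nonneg fun i _ => ha i
  have hsumU : 0 ≤ ∑ i ∈ U, a i := Finset.sum_nonneg fun i _ => ha i
  refine Real.sqrt_le_iff.2 ⟨by positivity, ?_⟩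
  calc ∑ j ∈ U, a j ^ 2 ≤ ∑ j ∈ U, (∑ i ∈ A, a i) / A.card * a j :=
        Finset.sum_le_sum fun j hj => by
          rw [sq]
          exact mul_le_mul_of_nonneg_right (le_sum_div_card hA fun i hi => hAU i hi j hj) (ha j)
    _ = 4 * (∑ i ∈ A, a i) * (∑ j ∈ U, a j) / (4 * A.card) := by
        rw [← Finset.mul_sum]
        field_simp
    _ ≤ (∑ i ∈ A, a i + ∑ i ∈ U, a i) ^ 2 / (4 * A.card) := by
        gcongr
        exact four_mul_le_sq_add _ _
    _ = ((∑ i ∈ A, a i + ∑ i ∈ U, a i) / √A.card / 2) ^ 2 := by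
        rw [div_pow, div_pow, Real.sq_sqrt hA0.le]
        ring

/- Each peeled block has `ℓ₂` norm at most `(√#A)⁻¹` times the `ℓ₁` norm of the block before it,
the set `A` playing the role of the block before the first. -/
lemma subadditive_le_mul_sum_add_sum_div [DecidableEq ι] {C : ℝ} (hC : 0 ≤ C) {F : Finset ι → ℝ}
    (hF_union : ∀ V V', Disjoint V V' → F (V ∪ V') ≤ F V + F V')
    (hF_le : ∀ V ⊆ U, V.card ≤ A.card → F V ≤ C * √(∑ i ∈ V, a i ^ 2)) :
    F U ≤ C * ((∑ i ∈ A, a i + ∑ i ∈ U, a i) / √A.card) := by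
  induction U using Finset.strongInduction generalizing A with
  | H U ih =>
    have hblock : ∀ V ⊆ U, V.card ≤ A.card → F V ≤ C * ((∑ i ∈ A, a i) / √A.card) :=
      fun V hV hcard => (hF_le V hV hcard).trans <| mul_le_mul_of_nonneg_left
        (sqrt_sum_sq_le_sum_div_sqrt_card ha hA (fun i hi j hj => hAU i hi j (hV hj)) hcard) hC
    obtain hcard | hcard := le_total U.card A.card
    · refine (hblock U subset_rfl hcard).trans ?_
      gcongr
      exact le_add_of_nonneg_right (Finset.sum_nonneg fun i _ => ha i)
    obtain ⟨A', hA'U, hA', hmax⟩ := exists_subset_card_eq_forall_sdiff_le a U hcard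
    have hA'_ne : A'.Nonempty := by rwa [← Finset.card_pos, hA', Finset.card_pos]
    have hrest := ih (U \ A') (Finset.sdiff_ssubset hA'U hA'_ne) hA'_ne hmax fun V hV hcard' =>
      hF_le V (hV.trans Finset.sdiff_subset) (hcard'.trans_eq hA')
    calc F U = F (A' ∪ U \ A') := by rw [Finset.union_sdiff_of_subset hA'U]
      _ ≤ F A' + F (U \ A') := hF_union _ _ Finset.disjoint_sdiff
      _ ≤ C * ((∑ i ∈ A, a i) / √A.card)
          + C * ((∑ i ∈ A', a i + ∑ i ∈ U \ A', a i) / √A.card) :=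
        add_le_add (hblock A' hA'U hA'.le) (hA' ▸ hrest)
      _ = C * ((∑ i ∈ A, a i + ∑ i ∈ U, a i) / √A.card) := by
        rw [add_comm (∑ i ∈ A', a i), Finset.sum_sdiff hA'U]
        ring

end LargestEntries

section Norms

variable {I J : Type*} [Fintype I] [Fintype J]

lemma l2norm_eq_norm (v : I → ℝ) : l2norm v = ‖WithLp.toLp 2 v‖ := by
  simp [l2norm, EuclideanSpace.norm_eq]

lemma l2norm_nonneg (v : I → ℝ) : 0 ≤ l2norm v := Real.sqrt_nonneg _

lemma l2norm_sq (v : I → ℝ) : l2norm v ^ 2 = ∑ i, v i ^ 2 :=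
  Real.sq_sqrt (Finset.sum_nonneg fun _ _ => sq_nonneg _)

lemma l2norm_zero : l2norm (0 : I → ℝ) = 0 := by simp [l2norm]

lemma l2norm_add_le (u v : I → ℝ) : l2norm (u + v) ≤ l2norm u + l2norm v := by
  simpa only [l2norm_eq_norm, WithLp.toLp_add] using norm_add_le _ _

lemma l2norm_smul (c : ℝ) (v : I → ℝ) : l2norm (c • v) = |c| * l2norm v := by
  simp only [l2norm_eq_norm, WithLp.toLp_smul, norm_smul, Real.norm_eq_abs]

lemma l2norm_sub_rev (u v : I → ℝ) : l2norm (u - v) = l2norm (v - u) := by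
  simp only [l2norm_eq_norm, WithLp.toLp_sub, norm_sub_rev]

lemma dotProduct_le_l2norm_mul_l2norm (u v : I → ℝ) : u ⬝ᵥ v ≤ l2norm u * l2norm v :=
  Real.sum_mul_le_sqrt_mul_sqrt _ _ _

lemma frobNorm_nonneg (M : Matrix I J ℝ) : 0 ≤ frobNorm M := Real.sqrt_nonneg _

lemma frobNorm_eq_sqrt_sum_l2norm_sq (M : Matrix I J ℝ) :
    frobNorm M = √(∑ i, l2norm (M i) ^ 2) := by
  simp only [frobNorm, l2norm_sq]

lemma frobNorm_sq_eq_sum_col (M : Matrix I J ℝ) :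
    frobNorm M ^ 2 = ∑ j, l2norm (fun i => M i j) ^ 2 := by
  rw [frobNorm, Real.sq_sqrt (by positivity), Finset.sum_comm]
  simp only [l2norm_sq]

lemma convexOn_norm21 : ConvexOn ℝ univ (norm21 : Matrix I J ℝ → ℝ) := by
  refine ⟨convex_univ, fun M _ N _ a b ha hb _ => ?_⟩
  simp only [norm21, smul_eq_mul, Finset.mul_sum]
  rw [← Finset.sum_add_distrib]
  refine Finset.sum_le_sum fun i _ => (l2norm_add_le (a • M i) (b • N i)).trans_eq ?_
  rw [l2norm_smul, l2norm_smul, abs_of_nonneg ha, abs_of_nonneg hb]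

end Norms

section FrobeniusInner

variable {I J L : Type*} [Fintype I] [Fintype J] [Fintype L]

/-- The Frobenius inner product `⟨M, N⟩ = tr (Mᵀ N)`, bundled as a bilinear form. -/
def frobInner : LinearMap.BilinForm ℝ (Matrix I J ℝ) :=
  LinearMap.mk₂ ℝ (fun M N => (Mᵀ * N).trace)
    (by simp [Matrix.add_mul]) (by simp) (by simp [Matrix.mul_add]) (by simp)

lemma frobInner_apply (M N : Matrix I J ℝ) : frobInner M N = (Mᵀ * N).trace := rfl

lemma frobInner_eq_sum_dotProduct (M N : Matrix I J ℝ) : frobInner M N = ∑ i, M i ⬝ᵥ N i := by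
  simp only [frobInner_apply, Matrix.trace, Matrix.diag, Matrix.mul_apply, dotProduct,
    Matrix.transpose_apply]
  exact Finset.sum_comm

lemma frobInner_comm (M N : Matrix I J ℝ) : frobInner M N = frobInner N M := by
  simp only [frobInner_eq_sum_dotProduct, dotProduct_comm]

lemma frobInner_mul_right (X : Matrix I J ℝ) (M : Matrix I L ℝ) (N : Matrix J L ℝ) :
    frobInner M (X * N) = frobInner (Xᵀ * M) N := by
  simp [frobInner_apply, Matrix.mul_assoc]

lemma frobInner_self (M : Matrix I J ℝ) : frobInner M M = frobNorm M ^ 2 := by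
  rw [frobNorm, Real.sq_sqrt (by positivity), frobInner_eq_sum_dotProduct]
  simp only [dotProduct, sq]

lemma frobNorm_add_smul_sq (M N : Matrix I J ℝ) (t : ℝ) :
    frobNorm (M + t • N) ^ 2 = frobNorm M ^ 2 + 2 * t * frobInner M N + t ^ 2 * frobNorm N ^ 2 := by
  simp only [← frobInner_self, map_add, map_smul, LinearMap.add_apply, LinearMap.smul_apply,
    smul_eq_mul, frobInner_comm N M]
  ring

lemma frobInner_le_mul_norm21 {M : Matrix I J ℝ} {c : ℝ} (hM : ∀ i, l2norm (M i) ≤ c)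
    (N : Matrix I J ℝ) : frobInner M N ≤ c * norm21 N := by
  rw [frobInner_eq_sum_dotProduct, norm21, Finset.mul_sum]
  exact Finset.sum_le_sum fun i _ => (dotProduct_le_l2norm_mul_l2norm _ _).trans
    (mul_le_mul_of_nonneg_right (hM i) (l2norm_nonneg _))

end FrobeniusInner

section RowRestrict

variable {I J : Type*}

/-- The restriction `M_T` of a matrix to a set `T` of rows. The rows outside `T` are set to zero
rather than deleted, so that `M_T` has the shape of `M`. -/
def rowRestrict (T : Finset I) (M : Matrix I J ℝ) : Matrix I J ℝ :=
  (T : Set I).indicator M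

lemma rowRestrict_of_mem {T : Finset I} {i : I} (hi : i ∈ T) (M : Matrix I J ℝ) :
    rowRestrict T M i = M i :=
  Set.indicator_of_mem (Finset.mem_coe.2 hi) _

lemma rowRestrict_of_notMem {T : Finset I} {i : I} (hi : i ∉ T) (M : Matrix I J ℝ) :
    rowRestrict T M i = 0 :=
  Set.indicator_of_notMem (by simpa using hi) _

lemma rowRestrict_univ [Fintype I] (M : Matrix I J ℝ) : rowRestrict Finset.univ M = M :=
  funext fun i => rowRestrict_of_mem (Finset.mem_univ i) M

lemma rowRestrict_union [DecidableEq I] {S T : Finset I} (h : Disjoint S T) (M : Matrix I J ℝ) :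
    rowRestrict (S ∪ T) M = rowRestrict S M + rowRestrict T M := by
  rw [rowRestrict, Finset.coe_union]
  exact Set.indicator_union_of_disjoint (Finset.disjoint_coe.2 h) M

lemma rowRestrict_add_rowRestrict_compl [Fintype I] [DecidableEq I] (T : Finset I)
    (M : Matrix I J ℝ) : rowRestrict T M + rowRestrict Tᶜ M = M := by
  rw [← rowRestrict_union disjoint_compl_right, Finset.union_compl, rowRestrict_univ]

variable [Fintype I] [Fintype J]

lemma sum_l2norm_rowRestrict (T : Finset I) (M : Matrix I J ℝ) {f : ℝ → ℝ} (hf : f 0 = 0) :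
    ∑ i, f (l2norm (rowRestrict T M i)) = ∑ i ∈ T, f (l2norm (M i)) := by
  rw [← Finset.sum_subset T.subset_univ fun i _ hi => by
    rw [rowRestrict_of_notMem hi, l2norm_zero, hf]]
  exact Finset.sum_congr rfl fun i hi => by rw [rowRestrict_of_mem hi]

lemma norm21_rowRestrict (T : Finset I) (M : Matrix I J ℝ) :
    norm21 (rowRestrict T M) = ∑ i ∈ T, l2norm (M i) :=
  sum_l2norm_rowRestrict T M (f := id) rfl

lemma frobNorm_rowRestrict (T : Finset I) (M : Matrix I J ℝ) :
    frobNorm (rowRestrict T M) = √(∑ i ∈ T, l2norm (M i) ^ 2) := by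
  rw [frobNorm_eq_sqrt_sum_l2norm_sq,
    sum_l2norm_rowRestrict T M (f := (· ^ 2)) (zero_pow two_ne_zero)]

lemma frobNorm_le_rowRestrict_add_rowRestrict_compl [DecidableEq I] (T : Finset I)
    (M : Matrix I J ℝ) :
    frobNorm M ≤ frobNorm (rowRestrict T M) + frobNorm (rowRestrict Tᶜ M) := by
  rw [frobNorm_eq_sqrt_sum_l2norm_sq, frobNorm_rowRestrict, frobNorm_rowRestrict,
    ← Finset.sum_add_sum_compl T]
  set x := ∑ i ∈ T, l2norm (M i) ^ 2
  set y := ∑ i ∈ Tᶜ, l2norm (M i) ^ 2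
  have hx : √x ^ 2 = x := Real.sq_sqrt (by positivity)
  have hy : √y ^ 2 = y := Real.sq_sqrt (by positivity)
  refine Real.sqrt_le_iff.2 ⟨by positivity, ?_⟩
  calc x + y = √x ^ 2 + √y ^ 2 := by rw [hx, hy]
    _ ≤ (√x + √y) ^ 2 := pow_add_pow_le (Real.sqrt_nonneg x) (Real.sqrt_nonneg y) two_ne_zero

lemma sum_l2norm_le_sqrt_card_mul_frobNorm {S T : Finset I} (hST : S ⊆ T) (M : Matrix I J ℝ) :
    ∑ i ∈ S, l2norm (M i) ≤ √S.card * frobNorm (rowRestrict T M) := by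
  rw [frobNorm_rowRestrict, ← Real.sqrt_mul (by positivity)]
  refine Real.le_sqrt_of_sq_le (sq_sum_le_card_mul_sum_sq.trans ?_)
  gcongr

lemma norm21_sub_rowRestrict_sub_le [DecidableEq I] {M N : Matrix I J ℝ} {S T : Finset I}
    (hN : ∀ i ∉ S, N i = 0) (hST : S ⊆ T) :
    norm21 (M - rowRestrict T (M - N)) ≤
      norm21 M + (∑ i ∈ S, l2norm ((M - N) i) - ∑ i ∈ T \ S, l2norm ((M - N) i)) := by
  have hrow (i : I) : l2norm ((M - rowRestrict T (M - N)) i) ≤ l2norm (M i) +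
      ((if i ∈ S then l2norm ((M - N) i) else 0) -
        if i ∈ T \ S then l2norm ((M - N) i) else 0) := by
    have hsub : (M - rowRestrict T (M - N)) i = M i - rowRestrict T (M - N) i := rfl
    by_cases hT : i ∈ T
    · have hMN : (M - N) i = M i - N i := rfl
      rw [hsub, rowRestrict_of_mem hT, hMN, sub_sub_cancel]
      by_cases hS : i ∈ S
      · have htri := l2norm_add_le (M i) (N i - M i)
        rw [add_sub_cancel, l2norm_sub_rev] at htri
        simpa [hS] using htri
      · simp [hS, hT, hN i hS, l2norm_zero]
    · have hS : i ∉ S := fun h => hT (hST h)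
      rw [hsub, rowRestrict_of_notMem hT, sub_zero]
      simp [hT, hS]
  refine (Finset.sum_le_sum fun i _ => hrow i).trans_eq ?_
  rw [Finset.sum_add_distrib, Finset.sum_sub_distrib, Finset.sum_ite_mem, Finset.sum_ite_mem,
    Finset.univ_inter, Finset.univ_inter, norm21]

end RowRestrict

section SparseRiesz

variable {n p : ℕ} {J : Type*} [Fintype J] (X : Matrix (Fin n) (Fin p) ℝ) {k : ℕ}

/-- The values `‖Xv‖²` at unit vectors `v` supported in some `k`-element set: the set whose
infimum and supremum are `κ₋²(k)` and `κ₊²(k)`. -/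
def sparseRayleighValues (k : ℕ) : Set ℝ :=
  {t | ∃ A : Finset (Fin p), A.card = k ∧ ∃ v : Fin p → ℝ,
    (∀ i, i ∉ A → v i = 0) ∧ l2norm v = 1 ∧ t = l2norm (X *ᵥ v) ^ 2}

lemma kappaMinusSq_eq_sInf : kappaMinusSq X k = sInf (sparseRayleighValues X k) := rfl

lemma kappaPlusSq_eq_sSup : kappaPlusSq X k = sSup (sparseRayleighValues X k) := rfl

lemma kappaMinusSq_eq_zero_of_lt (hk : p < k) : kappaMinusSq X k = 0 := by
  rw [kappaMinusSq_eq_sInf]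
  convert Real.sInf_empty
  refine Set.eq_empty_of_forall_notMem ?_
  rintro _ ⟨A, hA, -⟩
  have := A.card_le_univ
  rw [Fintype.card_fin] at this
  lia

lemma l2norm_mulVec_sq_le {I K : Type*} [Fintype I] [Fintype K] (M : Matrix I K ℝ) (v : K → ℝ) :
    l2norm (M *ᵥ v) ^ 2 ≤ frobNorm M ^ 2 * l2norm v ^ 2 := by
  rw [frobNorm_eq_sqrt_sum_l2norm_sq, Real.sq_sqrt (by positivity), l2norm_sq, Finset.sum_mul]
  refine Finset.sum_le_sum fun i _ => ?_
  rw [l2norm_sq, l2norm_sq]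
  exact Finset.sum_mul_sq_le_sq_mul_sq Finset.univ (M i) v

lemma bddBelow_sparseRayleighValues : BddBelow (sparseRayleighValues X k) :=
  ⟨0, by rintro _ ⟨_, _, _, _, _, rfl⟩; positivity⟩

lemma bddAbove_sparseRayleighValues : BddAbove (sparseRayleighValues X k) := by
  refine ⟨frobNorm X ^ 2, ?_⟩
  rintro _ ⟨_, _, v, _, hv, rfl⟩
  simpa [hv] using l2norm_mulVec_sq_le X v

variable {X} {A : Finset (Fin p)}

lemma div_mem_sparseRayleighValues (hk : k ≤ p) (hA : A.card ≤ k) {v : Fin p → ℝ}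
    (hv : ∀ i ∉ A, v i = 0) (hv0 : 0 < l2norm v) :
    l2norm (X *ᵥ v) ^ 2 / l2norm v ^ 2 ∈ sparseRayleighValues X k := by
  obtain ⟨A', hAA', hA'⟩ := Finset.exists_superset_card_eq hA (by simpa using hk)
  have hinv : |(l2norm v)⁻¹| = (l2norm v)⁻¹ := abs_of_pos (inv_pos.2 hv0)
  refine ⟨A', hA', (l2norm v)⁻¹ • v, fun i hi => ?_, ?_, ?_⟩
  · simp [hv i fun h => hi (hAA' h)]
  · rw [l2norm_smul, hinv, inv_mul_cancel₀ hv0.ne']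
  · rw [Matrix.mulVec_smul, l2norm_smul, hinv, mul_pow, inv_pow, div_eq_inv_mul]

lemma kappaMinusSq_mul_l2norm_sq_le (hA : A.card ≤ k) {v : Fin p → ℝ} (hv : ∀ i ∉ A, v i = 0) :
    kappaMinusSq X k * l2norm v ^ 2 ≤ l2norm (X *ᵥ v) ^ 2 := by
  obtain hk | hk := lt_or_ge p k
  · rw [kappaMinusSq_eq_zero_of_lt X hk, zero_mul]
    positivity
  obtain hv0 | hv0 := (l2norm_nonneg v).eq_or_lt
  · rw [← hv0, zero_pow two_ne_zero, mul_zero]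
    positivity
  · rw [← le_div_iff₀ (by positivity), kappaMinusSq_eq_sInf]
    exact csInf_le (bddBelow_sparseRayleighValues X) (div_mem_sparseRayleighValues hk hA hv hv0)

lemma l2norm_mulVec_sq_le_kappaPlusSq_mul (hk : k ≤ p) (hA : A.card ≤ k) {v : Fin p → ℝ}
    (hv : ∀ i ∉ A, v i = 0) : l2norm (X *ᵥ v) ^ 2 ≤ kappaPlusSq X k * l2norm v ^ 2 := by
  obtain hv0 | hv0 := (l2norm_nonneg v).eq_or_lt
  · simpa [← hv0] using l2norm_mulVec_sq_le X v
  · rw [← div_le_iff₀ (by positivity), kappaPlusSq_eq_sSup]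
    exact le_csSup (bddAbove_sparseRayleighValues X) (div_mem_sparseRayleighValues hk hA hv hv0)

lemma kappaMinusSq_le_kappaPlusSq {l : ℕ} (hk : 0 < k) (hkp : k ≤ p) (hl : 0 < l) :
    kappaMinusSq X l ≤ kappaPlusSq X k := by
  let i₀ : Fin p := ⟨0, hk.trans_le hkp⟩
  let e : Fin p → ℝ := Pi.single i₀ 1
  have he : ∀ i ∉ ({i₀} : Finset (Fin p)), e i = 0 := fun i hi => by
    simpa [e, Pi.single_apply] using hi
  have he_norm : l2norm e = 1 := by simp [e, l2norm, Pi.single_apply]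
  have hlow := kappaMinusSq_mul_l2norm_sq_le (X := X) (k := l)
    ((Finset.card_singleton i₀).trans_le hl) he
  have hupp := l2norm_mulVec_sq_le_kappaPlusSq_mul (X := X) hkp
    ((Finset.card_singleton i₀).trans_le hk) he
  simpa [he_norm] using hlow.trans hupp

lemma kappaMinusSq_mul_frobNorm_sq_le (hA : A.card ≤ k) {V : Matrix (Fin p) J ℝ}
    (hV : ∀ i ∉ A, V i = 0) : kappaMinusSq X k * frobNorm V ^ 2 ≤ frobNorm (X * V) ^ 2 := by
  rw [frobNorm_sq_eq_sum_col, frobNorm_sq_eq_sum_col, Finset.mul_sum]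
  exact Finset.sum_le_sum fun j _ =>
    kappaMinusSq_mul_l2norm_sq_le hA fun i hi => congrFun (hV i hi) j

lemma frobNorm_mul_sq_le_kappaPlusSq_mul (hk : k ≤ p) (hA : A.card ≤ k) {V : Matrix (Fin p) J ℝ}
    (hV : ∀ i ∉ A, V i = 0) : frobNorm (X * V) ^ 2 ≤ kappaPlusSq X k * frobNorm V ^ 2 := by
  rw [frobNorm_sq_eq_sum_col, frobNorm_sq_eq_sum_col, Finset.mul_sum]
  exact Finset.sum_le_sum fun j _ =>
    l2norm_mulVec_sq_le_kappaPlusSq_mul hk hA fun i hi => congrFun (hV i hi) j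

/- Expanding `‖X(U + tV)‖²` bounds a quadratic polynomial in `t` below by zero; the claim is that
its discriminant is nonpositive. -/
lemma abs_frobInner_mul_mul_le (hk : 0 < k) (hkp : k ≤ p) {S T : Finset (Fin p)}
    (hST : Disjoint S T) (hS : S.card ≤ k) (hT : T.card ≤ k) {U V : Matrix (Fin p) J ℝ}
    (hU : ∀ i ∉ S, U i = 0) (hV : ∀ i ∉ T, V i = 0) :
    |frobInner (X * U) (X * V)| ≤
      (kappaPlusSq X k - kappaMinusSq X (2 * k)) * (frobNorm U * frobNorm V) := by
  set δ := kappaPlusSq X k - kappaMinusSq X (2 * k)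
  have hδ : 0 ≤ δ := sub_nonneg.2 (kappaMinusSq_le_kappaPlusSq hk hkp (by lia))
  have horth : frobInner U V = 0 := by
    rw [frobInner_eq_sum_dotProduct]
    refine Finset.sum_eq_zero fun i _ => ?_
    by_cases hi : i ∈ S
    · rw [hV i (Finset.disjoint_left.1 hST hi), dotProduct_zero]
    · rw [hU i hi, zero_dotProduct]
  have hcard : (S ∪ T).card ≤ 2 * k := (Finset.card_union_le S T).trans (by lia)
  have hquad (t : ℝ) : 0 ≤ δ * frobNorm V ^ 2 * (t * t) + 2 * frobInner (X * U) (X * V) * t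
      + δ * frobNorm U ^ 2 := by
    have hsum := kappaMinusSq_mul_frobNorm_sq_le (X := X) (V := U + t • V) hcard fun i hi => by
      obtain ⟨hiS, hiT⟩ := Finset.notMem_union.1 hi
      change U i + t • V i = 0
      rw [hU i hiS, hV i hiT, smul_zero, add_zero]
    rw [Matrix.mul_add, Matrix.mul_smul, frobNorm_add_smul_sq, frobNorm_add_smul_sq, horth] at hsum
    have hXU := frobNorm_mul_sq_le_kappaPlusSq_mul (X := X) hkp hS hU
    have hXV := mul_le_mul_of_nonneg_left
      (frobNorm_mul_sq_le_kappaPlusSq_mul (X := X) hkp hT hV) (sq_nonneg t)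
    linear_combination hsum + hXU + hXV
  have hdiscrim := discrim_le_zero hquad
  rw [discrim] at hdiscrim
  refine abs_le_of_sq_le_sq ?_
    (mul_nonneg hδ (mul_nonneg (frobNorm_nonneg U) (frobNorm_nonneg V)))
  linear_combination hdiscrim / 4

lemma abs_frobInner_rowRestrict_compl_le {m : ℕ} (hmp : m ≤ p) (D : Matrix (Fin p) J ℝ)
    {T : Finset (Fin p)} (hA : A.Nonempty) (hAm : A.card ≤ m) (hT : T.card ≤ m)
    (hAT : ∀ i ∈ A, ∀ j ∈ Tᶜ, l2norm (D j) ≤ l2norm (D i)) :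
    |frobInner (X * rowRestrict T D) (X * rowRestrict Tᶜ D)| ≤
      (kappaPlusSq X m - kappaMinusSq X (2 * m)) * frobNorm (rowRestrict T D) *
        ((∑ i ∈ A, l2norm (D i) + ∑ i ∈ Tᶜ, l2norm (D i)) / √A.card) := by
  have hm : 0 < m := hA.card_pos.trans_le hAm
  refine subadditive_le_mul_sum_add_sum_div
    (F := fun V => |frobInner (X * rowRestrict T D) (X * rowRestrict V D)|)
    (fun i => l2norm_nonneg (D i)) hA hAT
    (mul_nonneg (sub_nonneg.2 (kappaMinusSq_le_kappaPlusSq hm hmp (by lia))) (frobNorm_nonneg _))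
    (fun V V' hVV' => ?_) (fun V hV hVA => ?_)
  · rw [rowRestrict_union hVV', Matrix.mul_add, map_add]
    exact abs_add_le _ _
  · have hTV : Disjoint T V := (Finset.subset_compl_iff_disjoint_left).1 hV
    rw [← frobNorm_rowRestrict, mul_assoc]
    exact abs_frobInner_mul_mul_le hm hmp hTV hT (hVA.trans hAm)
      (fun i hi => rowRestrict_of_notMem hi D) (fun i hi => rowRestrict_of_notMem hi D)

end SparseRiesz

section ConeCondition

variable {n p : ℕ} {I J : Type*} [Fintype I] [DecidableEq I] [Fintype J] {c : ℝ}

lemma sum_compl_div_sqrt_le_of_cone {M : Matrix I J ℝ} {S T : Finset I} (hST : S ⊆ T) {s k : ℕ}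
    (hS : S.card ≤ s) (hk : 0 < k) (hc : 0 < c) (hsk : 6 * c * √s ≤ √k)
    (hcone : ∑ i ∈ Sᶜ, l2norm (M i) ≤ 3 * ∑ i ∈ S, l2norm (M i)) :
    (∑ i ∈ Sᶜ, l2norm (M i)) / √k ≤ frobNorm (rowRestrict T M) / (2 * c) := by
  have hQ := frobNorm_nonneg (rowRestrict T M)
  rw [div_le_div_iff₀ (by positivity) (by positivity)]
  calc (∑ i ∈ Sᶜ, l2norm (M i)) * (2 * c)
      ≤ 3 * (√s * frobNorm (rowRestrict T M)) * (2 * c) := by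
        gcongr
        refine hcone.trans ?_
        gcongr
        refine (sum_l2norm_le_sqrt_card_mul_frobNorm hST M).trans ?_
        gcongr
    _ = frobNorm (rowRestrict T M) * (6 * c * √s) := by ring
    _ ≤ frobNorm (rowRestrict T M) * √k := by gcongr

lemma frobNorm_le_mul_frobNorm_rowRestrict {M : Matrix I J ℝ} {S A : Finset I}
    (hSA : Disjoint S A) (hA : A.Nonempty)
    (hmax : ∀ i ∈ A, ∀ j ∈ (S ∪ A)ᶜ, l2norm (M j) ≤ l2norm (M i))
    (htail : (∑ i ∈ Sᶜ, l2norm (M i)) / √A.card ≤ frobNorm (rowRestrict (S ∪ A) M) / (2 * c)) :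
    frobNorm M ≤ (1 + (4 * c)⁻¹) * frobNorm (rowRestrict (S ∪ A) M) := by
  have hcompl : frobNorm (rowRestrict (S ∪ A)ᶜ M) ≤ (∑ i ∈ Sᶜ, l2norm (M i)) / √A.card / 2 := by
    rw [frobNorm_rowRestrict, ← sum_add_sum_compl_union _ hSA]
    exact sqrt_sum_sq_le_sum_add_sum_div (fun i => l2norm_nonneg (M i)) hA hmax
  calc frobNorm M ≤ frobNorm (rowRestrict (S ∪ A) M) + frobNorm (rowRestrict (S ∪ A)ᶜ M) :=
        frobNorm_le_rowRestrict_add_rowRestrict_compl _ _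
    _ ≤ frobNorm (rowRestrict (S ∪ A) M) + frobNorm (rowRestrict (S ∪ A) M) / (2 * c) / 2 := by
        linarith
    _ = (1 + (4 * c)⁻¹) * frobNorm (rowRestrict (S ∪ A) M) := by ring

lemma kappaMinusSq_mul_frobNorm_rowRestrict_sq_le {X : Matrix (Fin n) (Fin p) ℝ} {m : ℕ}
    (hmp : m ≤ p) {D : Matrix (Fin p) J ℝ} {S A : Finset (Fin p)} (hSA : Disjoint S A)
    (hA : A.Nonempty) (hcard : (S ∪ A).card ≤ m)
    (hmax : ∀ i ∈ A, ∀ j ∈ (S ∪ A)ᶜ, l2norm (D j) ≤ l2norm (D i)) (hc : 0 < c)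
    (hSE : kappaPlusSq X m - kappaMinusSq X (2 * m) ≤ c * kappaMinusSq X m)
    (htail : (∑ i ∈ Sᶜ, l2norm (D i)) / √A.card ≤ frobNorm (rowRestrict (S ∪ A) D) / (2 * c)) :
    kappaMinusSq X m * frobNorm (rowRestrict (S ∪ A) D) ^ 2 / 2 ≤
      frobInner (X * D) (X * rowRestrict (S ∪ A) D) := by
  set T := S ∪ A
  set κ := kappaMinusSq X m
  set Q := frobNorm (rowRestrict T D)
  have hAm : A.card ≤ m := (Finset.card_le_card Finset.subset_union_right).trans hcard
  have hm : 0 < m := hA.card_pos.trans_le hAm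
  have hQ : 0 ≤ Q := frobNorm_nonneg _
  have hlow : κ * Q ^ 2 ≤ frobNorm (X * rowRestrict T D) ^ 2 :=
    kappaMinusSq_mul_frobNorm_sq_le hcard fun i hi => rowRestrict_of_notMem hi D
  have hcross : |frobInner (X * rowRestrict T D) (X * rowRestrict Tᶜ D)| ≤ κ * Q ^ 2 / 2 :=
    calc _ ≤ (kappaPlusSq X m - kappaMinusSq X (2 * m)) * Q *
          ((∑ i ∈ Sᶜ, l2norm (D i)) / √A.card) := by
            rw [← sum_add_sum_compl_union _ hSA]
            exact abs_frobInner_rowRestrict_compl_le hmp D hA hAm hcard hmax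
      _ ≤ (kappaPlusSq X m - kappaMinusSq X (2 * m)) * Q * (Q / (2 * c)) := by
            have := sub_nonneg.2 (kappaMinusSq_le_kappaPlusSq (X := X) (l := 2 * m) hm hmp (by lia))
            gcongr
      _ ≤ c * κ * Q * (Q / (2 * c)) := by gcongr
      _ = κ * Q ^ 2 / 2 := by field_simp
  have hsplit : frobInner (X * D) (X * rowRestrict T D) = frobNorm (X * rowRestrict T D) ^ 2
      + frobInner (X * rowRestrict T D) (X * rowRestrict Tᶜ D) := by
    rw [← frobInner_self, ← map_add, ← Matrix.mul_add, rowRestrict_add_rowRestrict_compl,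
      frobInner_comm]
  linarith [neg_le_of_abs_le hcross]

end ConeCondition

section GroupLasso

variable {N I J : Type*} [Fintype N] [Fintype I] [Fintype J] {X : Matrix N I ℝ}
  {W : Matrix N J ℝ} {Bhat : Matrix I J ℝ}

lemma frobInner_residual_le_of_forall_le {g : Matrix I J ℝ → ℝ} (hg : ConvexOn ℝ univ g)
    (hmin : ∀ B', frobNorm (W - X * Bhat) ^ 2 / 2 + g Bhat ≤ frobNorm (W - X * B') ^ 2 / 2 + g B')
    (B' : Matrix I J ℝ) :
    frobInner (W - X * Bhat) (X * (B' - Bhat)) ≤ g B' - g Bhat := by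
  set V := B' - Bhat with hV
  set q := frobNorm (X * V) ^ 2
  have hstep : ∀ t ∈ Set.Ioc (0 : ℝ) 1,
      frobInner (W - X * Bhat) (X * V) - (g B' - g Bhat) ≤ t * (q / 2) := by
    rintro t ⟨ht, ht1⟩
    have hconv : g (Bhat + t • V) ≤ (1 - t) * g Bhat + t * g B' := by
      have hpoint : Bhat + t • V = (1 - t) • Bhat + t • B' := by
        rw [hV]
        module
      rw [hpoint]
      exact hg.2 (mem_univ Bhat) (mem_univ B') (sub_nonneg.2 ht1) ht.le (by ring)
    have hres : W - X * (Bhat + t • V) = (W - X * Bhat) + (-t) • (X * V) := by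
      rw [Matrix.mul_add, Matrix.mul_smul]
      module
    have hobj := hmin (Bhat + t • V)
    rw [hres, frobNorm_add_smul_sq] at hobj
    refine le_of_mul_le_mul_left ?_ ht
    linear_combination hobj + hconv
  have hlim : Filter.Tendsto (fun t : ℝ => t * (q / 2)) (nhdsWithin 0 (Set.Ioi 0)) (nhds 0) := by
    have hcont : Continuous fun t : ℝ => t * (q / 2) := by fun_prop
    simpa using (hcont.tendsto 0).mono_left nhdsWithin_le_nhds
  have := ge_of_tendsto hlim (Filter.mem_of_superset (Ioc_mem_nhdsGT one_pos) hstep)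
  linarith

variable {B : Matrix I J ℝ} {S : Finset I} {lam : ℝ} (hlam : 0 < lam)
  (hB : ∀ i ∉ S, B i = 0)
  (hmin : ∀ B', frobNorm (W - X * Bhat) ^ 2 / 2 + lam * norm21 Bhat ≤
    frobNorm (W - X * B') ^ 2 / 2 + lam * norm21 B')
  (hcol : ∀ j, 2 * l2norm ((Xᵀ * (W - X * B)) j) ≤ lam)
include hlam hB hmin hcol

lemma groupLasso_basic_inequality [DecidableEq I] {T : Finset I} (hST : S ⊆ T) :
    frobInner (X * (Bhat - B)) (X * rowRestrict T (Bhat - B)) ≤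
      lam * (3 / 2 * ∑ i ∈ S, l2norm ((Bhat - B) i)
        - 1 / 2 * ∑ i ∈ T \ S, l2norm ((Bhat - B) i)) := by
  set D := Bhat - B with hD
  have hnoise : frobInner (W - X * B) (X * rowRestrict T D) ≤
      lam / 2 * ∑ i ∈ T, l2norm (D i) := by
    rw [frobInner_mul_right, ← norm21_rowRestrict]
    exact frobInner_le_mul_norm21 (fun j => by linarith [hcol j]) _
  have hpenalty : lam * norm21 (Bhat - rowRestrict T D) ≤ lam * (norm21 Bhat +
      (∑ i ∈ S, l2norm (D i) - ∑ i ∈ T \ S, l2norm (D i))) :=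
    mul_le_mul_of_nonneg_left (norm21_sub_rowRestrict_sub_le hB hST) hlam.le
  have hvar := frobInner_residual_le_of_forall_le (convexOn_norm21.smul hlam.le) hmin
    (Bhat - rowRestrict T D)
  have hdir : X * (Bhat - rowRestrict T D - Bhat) = -(X * rowRestrict T D) := by
    rw [sub_sub_cancel_left, Matrix.mul_neg]
  have hres : W - X * Bhat = (W - X * B) - X * D := by
    rw [hD, Matrix.mul_sub]
    abel
  rw [hdir, hres, map_neg, map_sub, LinearMap.sub_apply] at hvar
  simp only [smul_eq_mul] at hvar
  rw [← Finset.sum_sdiff hST] at hnoise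
  linear_combination hvar + hpenalty + hnoise

lemma groupLasso_cone [DecidableEq I] :
    ∑ i ∈ Sᶜ, l2norm ((Bhat - B) i) ≤ 3 * ∑ i ∈ S, l2norm ((Bhat - B) i) := by
  have hbasic := groupLasso_basic_inequality hlam hB hmin hcol S.subset_univ
  rw [rowRestrict_univ, frobInner_self, ← Finset.compl_eq_univ_sdiff] at hbasic
  linarith [nonneg_of_mul_nonneg_right ((sq_nonneg _).trans hbasic) hlam]

lemma frobInner_groupLasso_error_le {s : ℕ} (hS : S.card ≤ s) {T : Finset I} (hST : S ⊆ T) :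
    frobInner (X * (Bhat - B)) (X * rowRestrict T (Bhat - B)) ≤
      3 / 2 * lam * √s * frobNorm (rowRestrict T (Bhat - B)) := by
  classical
  have hQ := frobNorm_nonneg (rowRestrict T (Bhat - B))
  have hsum : 0 ≤ ∑ i ∈ T \ S, l2norm ((Bhat - B) i) :=
    Finset.sum_nonneg fun i _ => l2norm_nonneg _
  calc _ ≤ lam * (3 / 2 * ∑ i ∈ S, l2norm ((Bhat - B) i)
        - 1 / 2 * ∑ i ∈ T \ S, l2norm ((Bhat - B) i)) :=
        groupLasso_basic_inequality hlam hB hmin hcol hST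
    _ ≤ lam * (3 / 2 * ∑ i ∈ S, l2norm ((Bhat - B) i)) := by
        gcongr
        linarith
    _ ≤ lam * (3 / 2 * (√s * frobNorm (rowRestrict T (Bhat - B)))) := by
        gcongr
        refine (sum_l2norm_le_sqrt_card_mul_frobNorm hST _).trans ?_
        gcongr
    _ = 3 / 2 * lam * √s * frobNorm (rowRestrict T (Bhat - B)) := by ring

end GroupLasso

lemma exists_eq_add_of_mul_le_sqrt_div_sub_one {s m : ℕ} {c : ℝ} (hs : 0 < s) (hc : 0 < c)
    (h : c ≤ √((m : ℝ) / s - 1)) : ∃ k, 0 < k ∧ m = s + k ∧ c * √s ≤ √k := by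
  have hs' : (0 : ℝ) < s := by exact_mod_cast hs
  have hlt : s < m := by
    have := Real.sqrt_pos.1 (hc.trans_le h)
    rw [sub_pos, one_lt_div hs'] at this
    exact_mod_cast this
  obtain ⟨k, rfl⟩ := Nat.exists_eq_add_of_le hlt.le
  refine ⟨k, by lia, rfl, ?_⟩
  calc c * √s ≤ √(((s + k : ℕ) : ℝ) / s - 1) * √s := by gcongr
    _ = √k := by
        rw [← Real.sqrt_mul' _ hs'.le]
        congr 1
        push_cast
        field_simp
        ring

lemma le_div_of_mul_sq_le_mul {a b x : ℝ} (ha : 0 < a) (hb : 0 ≤ b) (h : a * x ^ 2 ≤ b * x) :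
    x ≤ b / a := by
  obtain hx | hx := le_or_gt x 0
  · exact hx.trans (by positivity)
  · rw [le_div_iff₀ ha]
    exact le_of_mul_le_mul_right (by linear_combination h) hx

theorem stmt2_general {n p : ℕ} {J : Type*} [Fintype J] {s sstar : ℕ} {cstar lam : ℝ}
    {X : Matrix (Fin n) (Fin p) ℝ} {B Bhat : Matrix (Fin p) J ℝ} {W : Matrix (Fin n) J ℝ}
    (hs : 1 ≤ s) (hsupp : (rowSupport B).card ≤ s) (hlam : 0 < lam) (hcstar : 0 < cstar)
    (hcs : 6 * cstar ≤ √((sstar : ℝ) / s - 1)) (hκ : 0 < kappaMinusSq X sstar)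
    (hSE : (kappaPlusSq X sstar - kappaMinusSq X (2 * sstar)) / kappaMinusSq X sstar ≤ cstar)
    (hmin : ∀ B' : Matrix (Fin p) J ℝ,
      frobNorm (W - X * Bhat) ^ 2 / 2 + lam * norm21 Bhat ≤
        frobNorm (W - X * B') ^ 2 / 2 + lam * norm21 B')
    (hcol : ∀ j : Fin p, 2 * l2norm ((Xᵀ * (W - X * B)) j) ≤ lam) :
    frobNorm (Bhat - B) ≤ 3 * (1 + (4 * cstar)⁻¹) * √s * lam / kappaMinusSq X sstar := by
  have hp : sstar ≤ p := not_lt.1 fun h => hκ.ne' (kappaMinusSq_eq_zero_of_lt X h)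
  have hB : ∀ i ∉ rowSupport B, B i = 0 := fun i hi => by simpa [rowSupport] using hi
  obtain ⟨k, hk, rfl, hsk⟩ := exists_eq_add_of_mul_le_sqrt_div_sub_one hs (by positivity) hcs
  obtain ⟨A, hSA, rfl, hmax⟩ := exists_disjoint_card_eq_forall_compl_union_le
    (fun i => l2norm ((Bhat - B) i)) (rowSupport B) (k := k) (by rw [Fintype.card_fin]; lia)
  have hA : A.Nonempty := Finset.card_pos.1 hk
  have hcard := (Finset.card_union_le (rowSupport B) A).trans (Nat.add_le_add_right hsupp _)
  have hST := Finset.subset_union_left (s₁ := rowSupport B) (s₂ := A)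
  have htail := sum_compl_div_sqrt_le_of_cone hST hsupp hk hcstar hsk
    (groupLasso_cone hlam hB hmin hcol)
  have hlow := kappaMinusSq_mul_frobNorm_rowRestrict_sq_le hp hSA hA hcard hmax hcstar
    ((div_le_iff₀ hκ).1 hSE) htail
  have hupp := frobInner_groupLasso_error_le hlam hB hmin hcol hsupp hST
  set Q := frobNorm (rowRestrict (rowSupport B ∪ A) (Bhat - B))
  have hQ : Q ≤ 3 * lam * √s / kappaMinusSq X (s + A.card) :=
    le_div_of_mul_sq_le_mul hκ (by positivity) (by linear_combination 2 * (hlow.trans hupp))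
  calc frobNorm (Bhat - B) ≤ (1 + (4 * cstar)⁻¹) * Q :=
        frobNorm_le_mul_frobNorm_rowRestrict hSA hA hmax htail
    _ ≤ (1 + (4 * cstar)⁻¹) * (3 * lam * √s / kappaMinusSq X (s + A.card)) := by gcongr
    _ = 3 * (1 + (4 * cstar)⁻¹) * √s * lam / kappaMinusSq X (s + A.card) := by ring

/-- Group Lasso error bound (deterministic part). Under the sparse eigenvalue
condition SE(s_*, c_*, K) with s_* ≥ 2s and 6c_* ≤ √(s_*/s − 1), if `B̂` minimizes the group
Lasso objective and `2‖X_{*j}'(W − XB)‖ ≤ λ` for all j, then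
`‖B̂ − B‖_F ≤ 3(1 + (4c_*)⁻¹)√s λ / κ₋²(s_*)`. -/
theorem stmt2 {n r p : ℕ} (s sstar : ℕ) (cstar K lam : ℝ)
    (X : Matrix (Fin n) (Fin p) ℝ) (B : Matrix (Fin p) (Fin r) ℝ) (Z : Matrix (Fin n) (Fin r) ℝ)
    (W : Matrix (Fin n) (Fin r) ℝ) (hW : W = X * B + Z)
    (hs : 1 ≤ s) (hsupp : (rowSupport B).card ≤ s)
    (hlam : 0 < lam)
    (hsstar : 2 * s ≤ sstar) (hcstar : 0 < cstar)
    (hcs : 6 * cstar ≤ Real.sqrt ((sstar : ℝ) / (s : ℝ) - 1))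
    (hK : 1 < K) (hK1 : K⁻¹ ≤ kappaMinus X sstar)
    (hK2 : kappaMinus X sstar ≤ kappaPlus X sstar) (hK3 : kappaPlus X sstar ≤ K)
    (hSE : (kappaPlusSq X sstar - kappaMinusSq X (2 * sstar)) / kappaMinusSq X sstar < cstar)
    (Bhat : Matrix (Fin p) (Fin r) ℝ)
    (hmin : ∀ B' : Matrix (Fin p) (Fin r) ℝ,
      frobNorm (W - X * Bhat) ^ 2 / 2 + lam * norm21 Bhat ≤
        frobNorm (W - X * B') ^ 2 / 2 + lam * norm21 B')
    (hcol : ∀ j : Fin p, 2 * l2norm ((Xᵀ * (W - X * B)) j) ≤ lam) :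
    frobNorm (Bhat - B) ≤ 3 * (1 + (4 * cstar)⁻¹) * Real.sqrt s * lam / kappaMinusSq X sstar := by
  exact stmt2_general hs hsupp hlam hcstar hcs
    (Real.sqrt_pos.1 ((inv_pos.2 (one_pos.trans hK)).trans_le hK1)) hSE.le hmin hcol

end
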